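/- Remark 2.7 (half-space case): Let Ω = {z = (z₁,…,zₙ) ∈ ℂⁿ : Re z₁ > 0}, let 𝕄 be an infinite subset of ℕ, let ζ ∈ Ω be fixed, and let (N_j)_{j≥0} be any enumeration of ℕⁿ. Then there exists a holomorphic function f on Ω such that for EVERY compact convex set K ⊆ ℂⁿ disjoint from Ω and every holomorphic polynomial P on ℂⁿ, there exists a sequence (λ_N)_{N≥1} with λ_N ∈ 𝕄 such that S_{λ_N}(f,ζ) → P uniformly on K and S_{λ_N}(f,ζ) → f uniformly on each compact subset of Ω, as N → ∞. -/

import Mathlib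

open Set Filter Topology

noncomputable section

/-- Evaluation of a multivariate polynomial as a function on `ℂⁿ = Fin n → ℂ`. -/
def mvEval {n : ℕ} (p : MvPolynomial (Fin n) ℂ) : (Fin n → ℂ) → ℂ :=
  fun z => MvPolynomial.eval z p

/-- The polynomially convex hull of a set in `ℂⁿ`. -/
def polyHull {n : ℕ} (K : Set (Fin n → ℂ)) : Set (Fin n → ℂ) :=
  {z | ∀ p : MvPolynomial (Fin n) ℂ, ‖mvEval p z‖ ≤ sSup ((fun w => ‖mvEval p w‖) '' K)}

/-- A set in `ℂⁿ` is polynomially convex if it equals its polynomially convex hull. -/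
def IsPolyConvex {n : ℕ} (K : Set (Fin n → ℂ)) : Prop := polyHull K = K

/-- The polynomially convex hull of a subset of `ℂ`. -/
def polyHull1 (F : Set ℂ) : Set ℂ :=
  {z | ∀ p : Polynomial ℂ, ‖p.eval z‖ ≤ sSup ((fun w => ‖p.eval w‖) '' F)}

/-- A subset of `ℂ` is polynomially convex if it equals its polynomially convex hull. -/
def IsPolyConvex1 (F : Set ℂ) : Prop := polyHull1 F = F

/-- Partial derivative in the `i`-th coordinate direction. -/
def pd {n : ℕ} (i : Fin n) (f : (Fin n → ℂ) → ℂ) : (Fin n → ℂ) → ℂ :=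
  fun z => fderiv ℂ f z (Pi.single i 1)

/-- Iterated partial derivative `D^ℓ = ∂^{ℓ₁+⋯+ℓₙ}/∂z₁^{ℓ₁}⋯∂zₙ^{ℓₙ}`. -/
def Dml {n : ℕ} (ℓ : Fin n → ℕ) (f : (Fin n → ℂ) → ℂ) : (Fin n → ℂ) → ℂ :=
  (List.finRange n).foldr (fun i g => (pd i)^[ℓ i] g) f

/-- Partial sums `S_λ` of a Taylor-type series around `ζ`, with coefficients computed from a
given family `g` of (extended) partial derivatives: the coefficient of the monomial
`(z-ζ)^{N_j}` is `g (N_j) ζ / (N_{j,1}! ⋯ N_{j,n}!)`. -/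
def pSumExt {n : ℕ} (Nj : ℕ → Fin n → ℕ) (g : (Fin n → ℕ) → (Fin n → ℂ) → ℂ)
    (ζ : Fin n → ℂ) (lam : ℕ) : (Fin n → ℂ) → ℂ :=
  fun z => ∑ j ∈ Finset.range (lam + 1),
    (((∏ i, Nat.factorial (Nj j i) : ℕ) : ℂ))⁻¹ * g (Nj j) ζ * ∏ i, (z i - ζ i) ^ (Nj j i)

/-- Partial sums `S_λ(f,ζ)` of the Taylor development of `f` around `ζ`. -/
def pSum {n : ℕ} (Nj : ℕ → Fin n → ℕ) (f : (Fin n → ℂ) → ℂ)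
    (ζ : Fin n → ℂ) (lam : ℕ) : (Fin n → ℂ) → ℂ :=
  pSumExt Nj (fun ℓ => Dml ℓ f) ζ lam

/-- The space `O(Ω)` of holomorphic functions on `Ω`. -/
def Ospace (n : ℕ) (Ω : Set (Fin n → ℂ)) : Type :=
  {f : (Fin n → ℂ) → ℂ // DifferentiableOn ℂ f Ω}

/-- Topology of uniform convergence on compact subsets of `Ω` on `O(Ω)` (the compact-open
topology induced via restriction to `Ω`). -/
instance (n : ℕ) (Ω : Set (Fin n → ℂ)) : TopologicalSpace (Ospace n Ω) :=
  TopologicalSpace.induced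
    (fun f : Ospace n Ω =>
      (⟨Ω.restrict f.1, continuousOn_iff_continuous_restrict.mp f.2.continuousOn⟩ : C(Ω, ℂ)))
    inferInstance

/-- Membership in `A^∞(Ω)`: `f` is holomorphic on `Ω` and each partial derivative `D^ℓ f`
extends continuously to the closure of `Ω`. -/
def AinfMem (n : ℕ) (Ω : Set (Fin n → ℂ)) (f : (Fin n → ℂ) → ℂ) : Prop :=
  DifferentiableOn ℂ f Ω ∧
    ∀ ℓ : Fin n → ℕ, ∃ g : (Fin n → ℂ) → ℂ,
      ContinuousOn g (closure Ω) ∧ Set.EqOn g (Dml ℓ f) Ω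

/-- The space `A^∞(Ω)`. -/
def AinfSpace (n : ℕ) (Ω : Set (Fin n → ℂ)) : Type :=
  {f : (Fin n → ℂ) → ℂ // AinfMem n Ω f}

/-- The chosen continuous extension of `D^ℓ f` to the closure of `Ω`, for `f ∈ A^∞(Ω)`.
(Its restriction to the closure of `Ω` is uniquely determined.) -/
def AinfExt {n : ℕ} {Ω : Set (Fin n → ℂ)} (f : AinfSpace n Ω) (ℓ : Fin n → ℕ) :
    (Fin n → ℂ) → ℂ :=
  Classical.choose (f.2.2 ℓ)

lemma AinfExt_continuousOn {n : ℕ} {Ω : Set (Fin n → ℂ)} (f : AinfSpace n Ω) (ℓ : Fin n → ℕ) :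
    ContinuousOn (AinfExt f ℓ) (closure Ω) :=
  (Classical.choose_spec (f.2.2 ℓ)).1

lemma AinfExt_eqOn {n : ℕ} {Ω : Set (Fin n → ℂ)} (f : AinfSpace n Ω) (ℓ : Fin n → ℕ) :
    Set.EqOn (AinfExt f ℓ) (Dml ℓ f.1) Ω :=
  (Classical.choose_spec (f.2.2 ℓ)).2

/-- Topology on `A^∞(Ω)`: uniform convergence of every partial derivative on every compact
subset of the closure of `Ω`. -/
instance (n : ℕ) (Ω : Set (Fin n → ℂ)) : TopologicalSpace (AinfSpace n Ω) :=
  TopologicalSpace.induced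
    (fun f : AinfSpace n Ω => fun ℓ : Fin n → ℕ =>
      (⟨(closure Ω).restrict (AinfExt f ℓ),
        continuousOn_iff_continuous_restrict.mp (AinfExt_continuousOn f ℓ)⟩ :
          C(closure Ω, ℂ)))
    inferInstance

/-- A smooth compact curve in `ℂⁿ`: the image of an injective `C^∞` map with
nowhere-vanishing derivative, defined on a compact interval (an arc) or on the
circle (a closed curve, modelled by a 1-periodic map). -/
def IsSmoothCompactCurve {n : ℕ} (K : Set (Fin n → ℂ)) : Prop :=
  ∃ γ : ℝ → (Fin n → ℂ), ContDiff ℝ (⊤ : ℕ∞) γ ∧ (∀ t, deriv γ t ≠ 0) ∧ K = γ '' Set.Icc 0 1 ∧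
    (Set.InjOn γ (Set.Icc 0 1) ∨ (Function.Periodic γ 1 ∧ Set.InjOn γ (Set.Ico 0 1)))

/-- A disjoint union of finitely many smooth compact curves. -/
def IsFiniteUnionOfSmoothCurves {n : ℕ} (K : Set (Fin n → ℂ)) : Prop :=
  ∃ (m : ℕ) (C : Fin m → Set (Fin n → ℂ)),
    (∀ i, IsSmoothCompactCurve (C i)) ∧ Pairwise (Function.onFun Disjoint C) ∧ K = ⋃ i, C i

/-!
If `p` vanishes at `ζ`, adding `p ^ d * (R - Q)` to a polynomial `Q` changes no Taylor coefficient
of `Q` at `ζ` of degree less than `d`. If moreover `p ^ d` is close to `1` on a compact set `K`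
outside `Ω` and close to `0` on a compact set `L ⊆ Ω`, then the new polynomial is close to `R` on
`K` and to `Q` on `L`. Iterating this with `R` running through a sequence of polynomials that comes
back infinitely often near every polynomial, and with `d` beyond all degrees occurring so far, gives
polynomials `Q k` converging locally uniformly on `Ω` to some `f`. Each `Q k` is one of its own
Taylor partial sums, which are frozen from then on, so it is also a partial sum of `f`.

For the half-space, compact sets on the two sides of a line in `ℂ` are separated by a rational
function with poles on that line only, to which Runge's theorem applies; `p` is obtained from the
resulting polynomial in `z₁`.
-/

section Separation

open Polynomial

theorem isUnit_aeval_of_not_isBounded_connectedComponentIn {A : Type*} [NormedRing A]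
    [NormedAlgebra ℂ A] [CompleteSpace A] (S : Subalgebra ℂ A) [IsClosed (S : Set A)] (x : S)
    (Q : ℂ[X]) (hQ : ∀ w, Q.IsRoot w →
      ¬ Bornology.IsBounded (connectedComponentIn (spectrum ℂ (x : A))ᶜ w)) :
    IsUnit (aeval x Q) := by
  refine (spectrum.zero_notMem_iff ℂ).mp fun h => ?_
  rcases subsingleton_or_nontrivial S with _ | _
  · exact (spectrum.zero_notMem_iff ℂ).mpr (isUnit_of_subsingleton _) h
  have : CompleteSpace S := ‹IsClosed (S : Set A)›.completeSpace_coe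
  obtain ⟨w, hw, hroot⟩ := spectrum.map_polynomial_aeval x Q ▸ h
  exact hQ w hroot (Subalgebra.spectrum_isBounded_connectedComponentIn S x hw)

theorem exists_polynomial_norm_eval_sub_div_lt {X : Set ℂ} (hX : IsCompact X) (P Q : ℂ[X])
    (hQ : ∀ w, Q.IsRoot w → ¬ Bornology.IsBounded (connectedComponentIn Xᶜ w))
    {ε : ℝ} (hε : 0 < ε) : ∃ q : ℂ[X], ∀ z ∈ X, ‖q.eval z - P.eval z / Q.eval z‖ < ε := by
  have : CompactSpace X := isCompact_iff_compactSpace.mp hX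
  let x₀ : C(X, ℂ) := ⟨Subtype.val, continuous_subtype_val⟩
  let S : Subalgebra ℂ C(X, ℂ) := (Algebra.adjoin ℂ {x₀}).topologicalClosure
  have : IsClosed (S : Set C(X, ℂ)) := Subalgebra.isClosed_topologicalClosure _
  let x : S := ⟨x₀, Subalgebra.le_topologicalClosure _ (Algebra.self_mem_adjoin_singleton ℂ x₀)⟩
  have eval_aeval (p : ℂ[X]) (z : X) : aeval x₀ p z = p.eval z.1 :=
    (aeval_algHom_apply (ContinuousMap.evalAlgHom ℂ ℂ z) x₀ p).symm
  have coe_aeval (p : ℂ[X]) : (aeval x p : C(X, ℂ)) = aeval x₀ p :=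
    (aeval_algHom_apply S.val x p).symm
  have hspec : spectrum ℂ x₀ = X :=
    (ContinuousMap.spectrum_eq_range x₀).trans Subtype.range_coe
  obtain ⟨y, hy⟩ : ∃ y, aeval x Q * y = 1 :=
    (isUnit_aeval_of_not_isBounded_connectedComponentIn S x Q
      (hspec.symm ▸ hQ : ∀ w, Q.IsRoot w →
        ¬ Bornology.IsBounded (connectedComponentIn (spectrum ℂ x₀)ᶜ w))).exists_right_inv
  have hg (z : X) : (aeval x P * y : S).1 z = P.eval z.1 / Q.eval z.1 := by
    have hinv : Q.eval z.1 * y.1 z = 1 := by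
      rw [← eval_aeval, ← coe_aeval]
      exact congrArg (fun s : S => s.1 z) hy
    rw [eq_div_iff (left_ne_zero_of_mul_eq_one hinv), ← eval_aeval P, ← coe_aeval P]
    calc (aeval x P).1 z * y.1 z * Q.eval z.1
        = (aeval x P).1 z * (Q.eval z.1 * y.1 z) := by ring
      _ = (aeval x P).1 z := by rw [hinv, mul_one]
  obtain ⟨b, hb, hlt⟩ := Metric.mem_closure_iff.mp (aeval x P * y).2 ε hε
  obtain ⟨q, rfl⟩ : ∃ q, aeval x₀ q = b := by
    have hb : b ∈ Algebra.adjoin ℂ {x₀} := hb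
    rwa [Algebra.adjoin_singleton_eq_range_aeval] at hb
  refine ⟨q, fun z hz => ?_⟩
  have := (ContinuousMap.dist_apply_le_dist ⟨z, hz⟩).trans_lt hlt
  rwa [hg, dist_comm, dist_eq_norm, eval_aeval] at this

section PowerQuotients

variable {X 𝕜 : Type*} [TopologicalSpace X] [NormedField 𝕜] {S : Set X}

theorem tendstoUniformlyOn_pow_of_norm_lt_one (hS : IsCompact S) {g : X → 𝕜}
    (hg : ContinuousOn g S) (hg1 : ∀ z ∈ S, ‖g z‖ < 1) :
    TendstoUniformlyOn (fun N z => g z ^ N) (fun _ => 0) (atTop : Filter ℕ) S := by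
  rcases S.eq_empty_or_nonempty with rfl | hne
  · exact tendstoUniformlyOn_empty
  obtain ⟨w, hw, hmax⟩ := hS.exists_isMaxOn hne hg.norm
  refine Metric.tendstoUniformlyOn_iff.mpr fun ε hε => ?_
  filter_upwards [(tendsto_pow_atTop_nhds_zero_of_lt_one (norm_nonneg _)
    (hg1 w hw)).eventually_lt_const hε] with N hN z hz
  rw [dist_zero_left, norm_pow]
  exact (pow_le_pow_left₀ (norm_nonneg _) (hmax hz) N).trans_lt hN

theorem tendstoUniformlyOn_pow_div_pow_add_pow_zero (hS : IsCompact S) {a b : X → 𝕜}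
    (ha : ContinuousOn a S) (hb : ContinuousOn b S) (hab : ∀ z ∈ S, ‖a z‖ < ‖b z‖) :
    TendstoUniformlyOn (fun N z => a z ^ N / (a z ^ N + b z ^ N)) (fun _ => 0)
      (atTop : Filter ℕ) S := by
  have hb0 : ∀ z ∈ S, b z ≠ 0 := fun z hz => norm_pos_iff.mp ((norm_nonneg _).trans_lt (hab z hz))
  have hpow := tendstoUniformlyOn_pow_of_norm_lt_one hS (ha.div hb hb0) fun z hz => by
    rw [Pi.div_apply, norm_div, div_lt_one (norm_pos_iff.mpr (hb0 z hz))]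
    exact hab z hz
  have hcont : Tendsto (fun w : 𝕜 => w / (w + 1)) (𝓝 0) (𝓝 0) := by
    have : ContinuousAt (fun w : 𝕜 => w / (w + 1)) 0 :=
      continuousAt_id.div (by fun_prop) (by simp)
    simpa only [zero_div] using this.tendsto
  have hratio : TendstoUniformlyOn (fun N z => (a z / b z) ^ N / ((a z / b z) ^ N + 1))
      (fun _ => 0) (atTop : Filter ℕ) S :=
    tendsto_prod_principal_iff.mp (hcont.comp (tendsto_prod_principal_iff.mpr hpow))
  refine hratio.congr (.of_forall fun N z hz => ?_)
  have := pow_ne_zero N (hb0 z hz)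
  simp only [div_pow]
  rw [div_add_one this, div_div_div_cancel_right₀ this]

theorem tendstoUniformlyOn_pow_div_pow_add_pow_one (hS : IsCompact S) {a b : X → 𝕜}
    (ha : ContinuousOn a S) (hb : ContinuousOn b S) (hab : ∀ z ∈ S, ‖b z‖ < ‖a z‖) :
    TendstoUniformlyOn (fun N z => a z ^ N / (a z ^ N + b z ^ N)) (fun _ => 1)
      (atTop : Filter ℕ) S := by
  refine Metric.tendstoUniformlyOn_iff.mpr fun ε hε => ?_
  filter_upwards [Metric.tendstoUniformlyOn_iff.mp
    (tendstoUniformlyOn_pow_div_pow_add_pow_zero hS hb ha hab) ε hε, eventually_ne_atTop 0]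
    with N hN hN0 z hz
  have hne : a z ^ N + b z ^ N ≠ 0 := fun h => by
    refine (pow_lt_pow_left₀ (hab z hz) (norm_nonneg _) hN0).ne ?_
    rw [← norm_pow, ← norm_pow, eq_neg_of_add_eq_zero_left h, norm_neg]
  have hsub : 1 - a z ^ N / (a z ^ N + b z ^ N) = b z ^ N / (b z ^ N + a z ^ N) := by
    rw [one_sub_div hne, add_sub_cancel_left, add_comm]
  rw [dist_eq_norm, hsub, ← dist_zero_left]
  exact hN z hz

end PowerQuotients

theorem norm_sub_sub_one_sq_sub_norm_sub_add_one_sq (c : ℝ) (z : ℂ) :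
    ‖z - (c - 1)‖ ^ 2 - ‖z - (c + 1)‖ ^ 2 = 4 * (z.re - c) := by
  simp only [Complex.sq_norm, Complex.normSq_apply, Complex.sub_re, Complex.sub_im,
    Complex.add_re, Complex.add_im, Complex.ofReal_re, Complex.ofReal_im, Complex.one_re,
    Complex.one_im]
  ring

theorem norm_sub_add_one_lt_norm_sub_sub_one {c : ℝ} {z : ℂ} (hz : c < z.re) :
    ‖z - (c + 1)‖ < ‖z - (c - 1)‖ :=
  lt_of_pow_lt_pow_left₀ 2 (norm_nonneg _)
    (by linarith [norm_sub_sub_one_sq_sub_norm_sub_add_one_sq c z])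

theorem norm_sub_sub_one_lt_norm_sub_add_one {c : ℝ} {z : ℂ} (hz : z.re < c) :
    ‖z - (c - 1)‖ < ‖z - (c + 1)‖ :=
  lt_of_pow_lt_pow_left₀ 2 (norm_nonneg _)
    (by linarith [norm_sub_sub_one_sq_sub_norm_sub_add_one_sq c z])

theorem re_eq_of_sub_pow_add_sub_pow_eq_zero {c : ℝ} {z : ℂ} {N : ℕ} (hN : N ≠ 0)
    (hz : (z - (c + 1)) ^ N + (z - (c - 1)) ^ N = 0) : z.re = c := by
  have hnorm : ‖z - (c + 1)‖ = ‖z - (c - 1)‖ := by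
    rw [← pow_left_inj₀ (norm_nonneg _) (norm_nonneg _) hN, ← norm_pow, ← norm_pow,
      eq_neg_of_add_eq_zero_left hz, norm_neg]
  have := norm_sub_sub_one_sq_sub_norm_sub_add_one_sq c z
  rw [hnorm] at this
  linarith

theorem not_isBounded_connectedComponentIn_of_re_ne {F : Set ℂ} {w : ℂ}
    (hF : ∀ z ∉ F, z.re ≠ w.re) : ¬ Bornology.IsBounded (connectedComponentIn F w) := by
  have hsub : {z : ℂ | z.re = w.re} ⊆ connectedComponentIn F w :=
    (convex_hyperplane Complex.reLm.isLinear w.re).isPreconnected.subset_connectedComponentIn rfl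
      fun z hz => by_contra fun hzF => hF z hzF hz
  intro hb
  obtain ⟨R, hR⟩ := (hb.subset hsub).exists_norm_le
  have hpoint := (Complex.abs_im_le_norm _).trans (hR (⟨w.re, |R| + 1⟩ : ℂ) rfl)
  linarith [le_abs_self (|R| + 1), le_abs_self R]

/- `(z - (c + 1)) ^ N / ((z - (c + 1)) ^ N + (z - (c - 1)) ^ N)` converges to `1` to the left of
the line `Re z = c` and to `0` to its right, and has all its poles on that line. -/
theorem exists_polynomial_near_one_near_zero_of_re_lt {K L : Set ℂ} (hK : IsCompact K)
    (hL : IsCompact L) {c : ℝ} (hKc : ∀ z ∈ K, z.re < c) (hLc : ∀ z ∈ L, c < z.re)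
    {ε : ℝ} (hε : 0 < ε) :
    ∃ q : ℂ[X], (∀ z ∈ K, ‖q.eval z - 1‖ < ε) ∧ ∀ z ∈ L, ‖q.eval z‖ < ε := by
  have hzero := Metric.tendstoUniformlyOn_iff.mp (tendstoUniformlyOn_pow_div_pow_add_pow_zero hL
    (a := fun z => z - (c + 1)) (b := fun z => z - (c - 1)) (by fun_prop) (by fun_prop)
    fun z hz => norm_sub_add_one_lt_norm_sub_sub_one (hLc z hz)) (ε / 2) (half_pos hε)
  have hone := Metric.tendstoUniformlyOn_iff.mp (tendstoUniformlyOn_pow_div_pow_add_pow_one hK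
    (a := fun z => z - (c + 1)) (b := fun z => z - (c - 1)) (by fun_prop) (by fun_prop)
    fun z hz => norm_sub_sub_one_lt_norm_sub_add_one (hKc z hz)) (ε / 2) (half_pos hε)
  obtain ⟨N, hN0, hNL, hNK⟩ := ((eventually_ne_atTop 0).and (hzero.and hone)).exists
  let P : ℂ[X] := (X - C (c + 1 : ℂ)) ^ N
  let Q : ℂ[X] := P + (X - C (c - 1 : ℂ)) ^ N
  have eval_P (z : ℂ) : P.eval z = (z - (c + 1)) ^ N := by
    simp only [P, eval_pow, eval_sub, eval_X, eval_C]
  have eval_Q (z : ℂ) : Q.eval z = (z - (c + 1)) ^ N + (z - (c - 1)) ^ N := by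
    simp only [Q, eval_P, eval_add, eval_pow, eval_sub, eval_X, eval_C]
  have hroots (w : ℂ) (hw : Q.IsRoot w) :
      ¬ Bornology.IsBounded (connectedComponentIn (K ∪ L)ᶜ w) := by
    have hwre : w.re = c := re_eq_of_sub_pow_add_sub_pow_eq_zero hN0 ((eval_Q w).symm.trans hw)
    refine not_isBounded_connectedComponentIn_of_re_ne fun z hz => hwre ▸ ?_
    rcases not_not.mp hz with hz | hz
    exacts [(hKc z hz).ne, (hLc z hz).ne']
  obtain ⟨q, hq⟩ :=
    exists_polynomial_norm_eval_sub_div_lt (hK.union hL) P Q hroots (half_pos hε)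
  simp only [eval_P, eval_Q, ← dist_eq_norm] at hq
  refine ⟨q, fun z hz => ?_, fun z hz => ?_⟩
  · rw [← dist_eq_norm]
    exact ((dist_triangle_right _ _ _).trans_lt
      (add_lt_add (hq z (.inl hz)) (hNK z hz))).trans_eq (add_halves ε)
  · rw [← dist_zero_right]
    exact ((dist_triangle_right _ _ _).trans_lt
      (add_lt_add (hq z (.inr hz)) (hNL z hz))).trans_eq (add_halves ε)

end Separation

section PolynomialSeparation

variable {n : ℕ} {Ω : Set (Fin n → ℂ)} {ζ : Fin n → ℂ}

theorem continuous_mvEval (p : MvPolynomial (Fin n) ℂ) : Continuous (mvEval p) :=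
  p.continuous_eval

/-- An open set is polynomially separated from its complement if some polynomial is close to `1` on
any given compact subset of the complement and close to `0` on any given compact subset of the set
itself. -/
def PolynomiallySeparated (Ω : Set (Fin n → ℂ)) : Prop :=
  ∀ ⦃K L : Set (Fin n → ℂ)⦄, IsCompact K → IsCompact L → Disjoint K Ω → L ⊆ Ω →
    ∀ ε > 0, ∃ p : MvPolynomial (Fin n) ℂ,
      (∀ z ∈ K, ‖mvEval p z - 1‖ < ε) ∧ ∀ z ∈ L, ‖mvEval p z‖ < ε

theorem polynomiallySeparated_setOf_re_pos (φ : MvPolynomial (Fin n) ℂ) :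
    PolynomiallySeparated {z | 0 < (mvEval φ z).re} := by
  intro K L hK hL hKΩ hLΩ ε hε
  have hφ := continuous_mvEval φ
  obtain ⟨c, hc, hcL⟩ : ∃ c > 0, ∀ z ∈ L, c < (mvEval φ z).re := by
    rcases L.eq_empty_or_nonempty with rfl | hne
    · exact ⟨1, one_pos, by simp⟩
    obtain ⟨w, hw, hmin⟩ := hL.exists_isMinOn hne (Complex.continuous_re.comp hφ).continuousOn
    have hw' := hLΩ hw
    exact ⟨(mvEval φ w).re / 2, half_pos hw', fun z hz => (half_lt_self hw').trans_le (hmin hz)⟩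
  obtain ⟨q, hqK, hqL⟩ := exists_polynomial_near_one_near_zero_of_re_lt (hK.image hφ)
    (hL.image hφ) (c := c) (forall_mem_image.mpr fun z hz =>
      (not_lt.mp (disjoint_left.mp hKΩ hz)).trans_lt hc) (forall_mem_image.mpr hcL) hε
  have eval_aeval (z : Fin n → ℂ) : mvEval (Polynomial.aeval φ q) z = q.eval (mvEval φ z) :=
    (Polynomial.aeval_algHom_apply (MvPolynomial.aeval z) φ q).symm
  simp only [forall_mem_image, ← eval_aeval] at hqK hqL
  exact ⟨Polynomial.aeval φ q, hqK, hqL⟩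

namespace PolynomiallySeparated

theorem exists_pow_near_one_near_zero (hΩ : PolynomiallySeparated Ω) (hζ : ζ ∈ Ω)
    {K L : Set (Fin n → ℂ)} (hK : IsCompact K) (hL : IsCompact L) (hKΩ : Disjoint K Ω)
    (hLΩ : L ⊆ Ω) {d : ℕ} (hd : d ≠ 0) {ε : ℝ} (hε : 0 < ε) :
    ∃ p : MvPolynomial (Fin n) ℂ, mvEval p ζ = 0 ∧
      (∀ z ∈ K, ‖mvEval p z ^ d - 1‖ < ε) ∧ ∀ z ∈ L, ‖mvEval p z ^ d‖ < ε := by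
  have hpow : Continuous fun w : ℂ => w ^ d := continuous_pow d
  obtain ⟨δ₁, hδ₁, hone⟩ := Metric.continuousAt_iff.mp (hpow.continuousAt (x := 1)) ε hε
  obtain ⟨δ₀, hδ₀, hzero⟩ := Metric.continuousAt_iff.mp (hpow.continuousAt (x := 0)) ε hε
  simp only [one_pow, zero_pow hd, dist_eq_norm, sub_zero] at hone hzero
  obtain ⟨q, hqK, hqL⟩ := hΩ hK (hL.insert ζ) hKΩ (insert_subset hζ hLΩ)
    (min δ₁ δ₀ / 2) (by positivity)
  have hqζ := hqL ζ (mem_insert ζ L)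
  have hle₁ := min_le_left δ₁ δ₀
  have hle₀ := min_le_right δ₁ δ₀
  have eval_sub (z : Fin n → ℂ) :
      mvEval (q - MvPolynomial.C (mvEval q ζ)) z = mvEval q z - mvEval q ζ := by
    simp only [mvEval, map_sub, MvPolynomial.eval_C]
  refine ⟨q - MvPolynomial.C (mvEval q ζ), by rw [eval_sub, sub_self],
    fun z hz => hone ?_, fun z hz => hzero ?_⟩
  · rw [eval_sub, sub_right_comm]
    linarith [norm_sub_le (mvEval q z - 1) (mvEval q ζ), hqK z hz]
  · rw [eval_sub]
    linarith [norm_sub_le (mvEval q z) (mvEval q ζ), hqL z (mem_insert_of_mem ζ hz)]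

theorem exists_add_pow_mul_sub_near (hΩ : PolynomiallySeparated Ω) (hζ : ζ ∈ Ω)
    (Q R : MvPolynomial (Fin n) ℂ) {K L : Set (Fin n → ℂ)} (hK : IsCompact K) (hL : IsCompact L)
    (hKΩ : Disjoint K Ω) (hLΩ : L ⊆ Ω) {d : ℕ} (hd : d ≠ 0) {ε : ℝ} (hε : 0 < ε) :
    ∃ p : MvPolynomial (Fin n) ℂ, mvEval p ζ = 0 ∧
      (∀ z ∈ K, dist (mvEval (Q + p ^ d * (R - Q)) z) (mvEval R z) < ε) ∧
      ∀ z ∈ L, dist (mvEval (Q + p ^ d * (R - Q)) z) (mvEval Q z) < ε := by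
  obtain ⟨C, hC⟩ := (hK.union hL).exists_bound_of_continuousOn
    (continuous_mvEval (R - Q)).continuousOn
  have hC' : 0 < |C| + 1 := by positivity
  obtain ⟨p, hpζ, hpK, hpL⟩ :=
    hΩ.exists_pow_near_one_near_zero hζ hK hL hKΩ hLΩ hd (div_pos hε hC')
  have mul_lt {w : ℂ} {z : Fin n → ℂ} (hw : ‖w‖ < ε / (|C| + 1)) (hz : z ∈ K ∪ L) :
      ‖w * mvEval (R - Q) z‖ < ε := by
    rw [lt_div_iff₀ hC'] at hw
    refine lt_of_le_of_lt ?_ hw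
    rw [norm_mul]
    gcongr
    exact (hC z hz).trans ((le_abs_self C).trans (lt_add_one _).le)
  refine ⟨p, hpζ, fun z hz => ?_, fun z hz => ?_⟩
  · convert mul_lt (hpK z hz) (.inl hz) using 1
    rw [dist_eq_norm]
    congr 1
    simp only [mvEval, map_add, map_mul, map_pow, map_sub]
    ring
  · convert mul_lt (hpL z hz) (.inr hz) using 1
    rw [dist_eq_norm]
    congr 1
    simp only [mvEval, map_add, map_mul, map_pow, map_sub]
    ring

end PolynomiallySeparated

end PolynomialSeparation

section TaylorCoefficients

open MvPolynomial

section Recenter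

variable {σ R : Type*} [CommRing R]

/-- The polynomial `Q` rewritten in powers of `X - ζ`: the coefficient of `X ^ m` in `recenter ζ Q`
is the Taylor coefficient of `Q` at `ζ` with index `m`. -/
def recenter (ζ : σ → R) : MvPolynomial σ R →ₐ[R] MvPolynomial σ R :=
  aeval fun i => X i + C (ζ i)

theorem eval_recenter (ζ w : σ → R) (Q : MvPolynomial σ R) :
    eval w (recenter ζ Q) = eval (w + ζ) Q := by
  induction Q using MvPolynomial.induction_on with
  | C a => simp [recenter]
  | add p q hp hq => simp only [map_add, hp, hq]
  | mul_X p i hp =>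
    have hX : recenter ζ (X i) = X i + C (ζ i) := aeval_X _ i
    simp only [map_mul, map_add, hp, hX, eval_X, eval_C, Pi.add_apply]

theorem constantCoeff_recenter (ζ : σ → R) (Q : MvPolynomial σ R) :
    constantCoeff (recenter ζ Q) = eval ζ Q := by
  rw [← eval_zero, eval_recenter, zero_add]

theorem pderiv_recenter (ζ : σ → R) (i : σ) (Q : MvPolynomial σ R) :
    pderiv i (recenter ζ Q) = recenter ζ (pderiv i Q) := by
  classical
  induction Q using MvPolynomial.induction_on with
  | C a => simp [recenter]
  | add p q hp hq => simp only [map_add, hp, hq]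
  | mul_X p j hp =>
    have hX : recenter ζ (X j) = X j + C (ζ j) := aeval_X _ j
    have hsingle : recenter ζ (pderiv i (X j)) = pderiv i (X j) := by
      rw [pderiv_X]
      rcases eq_or_ne i j with rfl | hij
      · simp
      · simp [hij]
    simp only [map_mul, Derivation.leibniz, smul_eq_mul, map_add, hp, hX, hsingle, pderiv_C,
      add_zero]

theorem coeff_recenter_add_pow_mul {ζ : σ → R} {p : MvPolynomial σ R} (hp : eval ζ p = 0)
    (Q G : MvPolynomial σ R) {d : ℕ} {m : σ →₀ ℕ} (hm : m.degree < d) :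
    coeff m (recenter ζ (Q + p ^ d * G)) = coeff m (recenter ζ Q) := by
  have hmem : recenter ζ p ∈ idealOfVars σ R := by
    rw [← pow_one (idealOfVars σ R), mem_pow_idealOfVars_iff']
    intro m hm
    obtain rfl : m = 0 := (Finsupp.degree_eq_zero_iff m).mp (Nat.lt_one_iff.mp hm)
    rw [← constantCoeff_eq, constantCoeff_recenter, hp]
  have hpow := Ideal.mul_mem_right (recenter ζ G) _ (Ideal.pow_mem_pow hmem d)
  rw [map_add, map_mul, map_pow, coeff_add, (mem_pow_idealOfVars_iff' d _).mp hpow m hm, add_zero]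

end Recenter

section IteratedPderiv

variable {n : ℕ} {σ R : Type*} [CommSemiring R]

theorem coeff_iterate_pderiv (Q : MvPolynomial σ R) (i : σ) (k : ℕ) (m : σ →₀ ℕ) :
    coeff m ((pderiv i)^[k] Q) =
      coeff (m + Finsupp.single i k) Q * ((m i + 1).ascFactorial k : ℕ) := by
  induction k generalizing Q with
  | zero => simp
  | succ k ih =>
    rw [Function.iterate_succ_apply, ih, coeff_pderiv, add_assoc, ← Finsupp.single_add,
      Nat.ascFactorial_succ]
    simp only [Finsupp.add_apply, Finsupp.single_eq_same]
    push_cast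
    ring

theorem coeff_foldr_iterate_pderiv (Q : MvPolynomial σ R) (ℓ : σ → ℕ) {l : List σ}
    (hl : l.Nodup) {m : σ →₀ ℕ} (hm : ∀ i ∈ l, m i = 0) :
    coeff m (l.foldr (fun i q => (pderiv i)^[ℓ i] q) Q) =
      coeff (m + (l.map fun i => Finsupp.single i (ℓ i)).sum) Q *
        ((l.map fun i => (ℓ i).factorial).prod : ℕ) := by
  induction l generalizing m with
  | nil => simp
  | cons i l ih =>
    obtain ⟨hil, hl⟩ := List.nodup_cons.mp hl
    have hm' : ∀ j ∈ l, (m + Finsupp.single i (ℓ i)) j = 0 := fun j hj => by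
      have hij : i ≠ j := fun h => hil (h ▸ hj)
      rw [Finsupp.add_apply, hm j (List.mem_cons_of_mem i hj), zero_add,
        Finsupp.single_eq_of_ne hij.symm]
    rw [List.foldr_cons, coeff_iterate_pderiv, ih hl hm', hm i List.mem_cons_self, zero_add,
      Nat.one_ascFactorial, List.map_cons, List.sum_cons, List.map_cons, List.prod_cons, add_assoc]
    push_cast
    ring

/-- The mixed partial derivative `∂^ℓ Q` of a polynomial, taken in the same order as in `Dml`. -/
def iteratedPderiv (ℓ : Fin n → ℕ) (Q : MvPolynomial (Fin n) R) : MvPolynomial (Fin n) R :=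
  (List.finRange n).foldr (fun i q => (pderiv i)^[ℓ i] q) Q

theorem constantCoeff_iteratedPderiv (ℓ : Fin n → ℕ) (Q : MvPolynomial (Fin n) R) :
    constantCoeff (iteratedPderiv ℓ Q) =
      coeff (Finsupp.equivFunOnFinite.symm ℓ) Q * ((∏ i, (ℓ i).factorial : ℕ) : R) := by
  have hsum : ((List.finRange n).map fun i => Finsupp.single i (ℓ i)).sum =
      Finsupp.equivFunOnFinite.symm ℓ := by
    ext j
    rw [← List.ofFn_eq_map, List.sum_ofFn]
    simp [Finsupp.single_apply]
  rw [constantCoeff_eq, iteratedPderiv,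
    coeff_foldr_iterate_pderiv Q ℓ (List.nodup_finRange n) fun i _ => rfl, zero_add, hsum]
  congr 2

theorem iteratedPderiv_recenter {R : Type*} [CommRing R] (ζ : Fin n → R) (ℓ : Fin n → ℕ)
    (Q : MvPolynomial (Fin n) R) :
    iteratedPderiv ℓ (recenter ζ Q) = recenter ζ (iteratedPderiv ℓ Q) :=
  List.foldr_hom (recenter ζ) fun i q =>
    (Function.Semiconj.iterate_right (fun p => (pderiv_recenter ζ i p).symm) (ℓ i) q).symm

end IteratedPderiv

variable {n : ℕ} {Nj : ℕ → Fin n → ℕ} {ζ : Fin n → ℂ}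

theorem hasFDerivAt_mvEval (Q : MvPolynomial (Fin n) ℂ) (z : Fin n → ℂ) :
    HasFDerivAt (mvEval Q)
      (∑ i, mvEval (pderiv i Q) z • (ContinuousLinearMap.proj i : (Fin n → ℂ) →L[ℂ] ℂ)) z := by
  induction Q using MvPolynomial.induction_on with
  | C a =>
    have : mvEval (C a) = fun _ : Fin n → ℂ => a := funext fun z => eval_C a
    rw [this]
    exact (hasFDerivAt_const a z).congr_fderiv (by ext v; simp [mvEval])
  | add p q hp hq =>
    have : mvEval (p + q) = mvEval p + mvEval q := funext fun z => map_add (eval z) p q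
    rw [this]
    refine (hp.add hq).congr_fderiv ?_
    ext v
    simp [mvEval, add_mul, Finset.sum_add_distrib]
  | mul_X p i hp =>
    have : mvEval (p * X i) = fun z => mvEval p z * z i := funext fun z => by simp [mvEval]
    rw [this]
    refine (hp.mul (ContinuousLinearMap.proj i : (Fin n → ℂ) →L[ℂ] ℂ).hasFDerivAt).congr_fderiv ?_
    ext v
    simp [mvEval, pderiv_X, Pi.single_apply, add_mul, Finset.sum_add_distrib, Finset.mul_sum,
      apply_ite, mul_assoc]

theorem differentiable_mvEval (Q : MvPolynomial (Fin n) ℂ) : Differentiable ℂ (mvEval Q) :=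
  fun z => (hasFDerivAt_mvEval Q z).differentiableAt

theorem pd_mvEval (i : Fin n) (Q : MvPolynomial (Fin n) ℂ) :
    pd i (mvEval Q) = mvEval (pderiv i Q) := by
  funext z
  rw [pd, (hasFDerivAt_mvEval Q z).fderiv]
  simp [Pi.single_apply]

theorem Dml_mvEval (ℓ : Fin n → ℕ) (Q : MvPolynomial (Fin n) ℂ) :
    Dml ℓ (mvEval Q) = mvEval (iteratedPderiv ℓ Q) :=
  List.foldr_hom mvEval fun i q =>
    (Function.Semiconj.iterate_right (fun p => (pd_mvEval i p).symm) (ℓ i) q).symm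

theorem pSum_mvEval (Nj : ℕ → Fin n → ℕ) (Q : MvPolynomial (Fin n) ℂ) (ζ : Fin n → ℂ) (lam : ℕ) :
    pSum Nj (mvEval Q) ζ lam = fun z => ∑ j ∈ Finset.range (lam + 1),
      coeff (Finsupp.equivFunOnFinite.symm (Nj j)) (recenter ζ Q) *
        ∏ i, (z i - ζ i) ^ Nj j i := by
  funext z
  rw [pSum, pSumExt]
  refine Finset.sum_congr rfl fun j _ => ?_
  have hfac : ((∏ i, (Nj j i).factorial : ℕ) : ℂ) ≠ 0 :=
    Nat.cast_ne_zero.mpr (Finset.prod_pos fun i _ => Nat.factorial_pos _).ne'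
  have hcoeff : Dml (Nj j) (mvEval Q) ζ = coeff (Finsupp.equivFunOnFinite.symm (Nj j))
      (recenter ζ Q) * ((∏ i, (Nj j i).factorial : ℕ) : ℂ) := by
    rw [Dml_mvEval, mvEval, ← constantCoeff_recenter, ← iteratedPderiv_recenter,
      constantCoeff_iteratedPderiv]
  rw [hcoeff, mul_comm (coeff _ _), inv_mul_cancel_left₀ hfac]

theorem mvEval_eq_sum_recenter (Q : MvPolynomial (Fin n) ℂ) (ζ z : Fin n → ℂ) :
    mvEval Q z = ∑ m ∈ (recenter ζ Q).support,
      coeff m (recenter ζ Q) * ∏ i, (z i - ζ i) ^ m i := by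
  have hz : eval z Q = eval (z - ζ) (recenter ζ Q) := by rw [eval_recenter, sub_add_cancel]
  rw [mvEval, hz, eval_eq']
  rfl

theorem eventually_pSum_mvEval_eq (hNj : Function.Bijective Nj) (ζ : Fin n → ℂ)
    (Q : MvPolynomial (Fin n) ℂ) :
    ∀ᶠ lam in atTop, pSum Nj (mvEval Q) ζ lam = mvEval Q := by
  let e : ℕ ≃ (Fin n →₀ ℕ) := (Equiv.ofBijective Nj hNj).trans Finsupp.equivFunOnFinite.symm
  have hsub : ∀ᶠ lam in atTop,
      (recenter ζ Q).support.map e.symm.toEmbedding ⊆ Finset.range (lam + 1) :=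
    (tendsto_finset_range.comp (tendsto_add_atTop_nat 1)).eventually_ge_atTop _
  filter_upwards [hsub] with lam hlam
  funext z
  have hsum : mvEval Q z = ∑ j ∈ (recenter ζ Q).support.map e.symm.toEmbedding,
      coeff (e j) (recenter ζ Q) * ∏ i, (z i - ζ i) ^ e j i := by
    rw [Finset.sum_map, mvEval_eq_sum_recenter Q ζ z]
    simp only [Equiv.coe_toEmbedding, Equiv.apply_symm_apply]
  rw [pSum_mvEval, hsum]
  refine (Finset.sum_subset hlam fun j _ hj => ?_).symm
  rw [Finset.mem_map_equiv, Equiv.symm_symm, notMem_support_iff] at hj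
  exact mul_eq_zero_of_left hj _

theorem pSum_mvEval_add_pow_mul (Nj : ℕ → Fin n → ℕ) {p : MvPolynomial (Fin n) ℂ}
    (hp : mvEval p ζ = 0) (Q G : MvPolynomial (Fin n) ℂ) {d lam : ℕ}
    (hd : ∀ j ≤ lam, ∑ i, Nj j i < d) :
    pSum Nj (mvEval (Q + p ^ d * G)) ζ lam = pSum Nj (mvEval Q) ζ lam := by
  simp only [pSum_mvEval]
  funext z
  refine Finset.sum_congr rfl fun j hj => ?_
  rw [coeff_recenter_add_pow_mul hp]
  rw [Finsupp.degree_eq_sum]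
  exact hd j (Finset.mem_range_succ_iff.mp hj)

end TaylorCoefficients

section LocallyUniformLimits

section Weierstrass

variable {E G ι : Type*} [NormedAddCommGroup E] [NormedSpace ℂ E] [NormedAddCommGroup G]
  [NormedSpace ℂ G] {l : Filter ι} {F : ι → E → G} {f : E → G} {Ω s : Set E}

theorem norm_fderiv_le_two_mul_div_of_forall_mem_ball {c : E} {R C : ℝ} (hR : 0 < R)
    (hf : DifferentiableOn ℂ f (Metric.ball c R)) (hC : ∀ z ∈ Metric.ball c R, ‖f z‖ ≤ C) :
    ‖fderiv ℂ f c‖ ≤ 2 * C / R := by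
  refine Complex.norm_fderiv_le_div_of_mapsTo_ball hf (fun z hz => ?_) hR
  rw [mem_closedBall_iff_norm]
  linarith [norm_sub_le (f z) (f c), hC z hz, hC c (Metric.mem_ball_self hR)]

theorem uniformCauchySeqOn_fderiv_of_thickening {δ : ℝ} (hδ : 0 < δ)
    (hF : ∀ k, DifferentiableOn ℂ (F k) (Metric.thickening δ s))
    (hC : UniformCauchySeqOn F l (Metric.thickening δ s)) :
    UniformCauchySeqOn (fun k => fderiv ℂ (F k)) l s := by
  intro u hu
  obtain ⟨ε, hε, hεu⟩ := Metric.mem_uniformity_dist.mp hu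
  filter_upwards [hC _ (Metric.dist_mem_uniformity (show 0 < ε * δ / 4 by positivity))]
    with ⟨j, k⟩ hjk y hy
  have hball : Metric.ball y δ ⊆ Metric.thickening δ s := Metric.ball_subset_thickening hy δ
  have hdiff (k : ι) : DifferentiableAt ℂ (F k) y :=
    (hF k).differentiableAt
      (Metric.isOpen_thickening.mem_nhds (hball (Metric.mem_ball_self hδ)))
  have hle : ‖fderiv ℂ (F j - F k) y‖ ≤ 2 * (ε * δ / 4) / δ :=
    norm_fderiv_le_two_mul_div_of_forall_mem_ball hδ (((hF j).sub (hF k)).mono hball)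
      fun z hz => (dist_eq_norm (F j z) (F k z)).symm.trans_le (hjk z (hball hz)).le
  rw [fderiv_sub (hdiff j) (hdiff k), ← dist_eq_norm] at hle
  refine hεu (hle.trans_lt ?_)
  field_simp
  norm_num

variable [LocallyCompactSpace E] [CompleteSpace G] [l.NeBot]

theorem exists_tendstoLocallyUniformlyOn_fderiv (hΩ : IsOpen Ω)
    (hF : ∀ k, DifferentiableOn ℂ (F k) Ω) (hf : TendstoLocallyUniformlyOn F f l Ω) :
    ∃ f' : E → E →L[ℂ] G, TendstoLocallyUniformlyOn (fun k => fderiv ℂ (F k)) f' l Ω := by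
  have hlocal : ∀ x ∈ Ω, ∃ t ∈ 𝓝 x, UniformCauchySeqOn (fun k => fderiv ℂ (F k)) l t := by
    intro x hx
    obtain ⟨K, ⟨hKx, hK⟩, hKΩ⟩ := (compact_basis_nhds x).mem_iff.mp (hΩ.mem_nhds hx)
    obtain ⟨δ, hδ, hδK⟩ := Metric.mem_nhds_iff.mp hKx
    have hsub : Metric.thickening (δ / 2) (Metric.ball x (δ / 2)) ⊆ K :=
      (Metric.thickening_ball _ _ _).trans (by rwa [add_halves])
    have hfK : TendstoUniformlyOn F f l K :=
      (tendstoLocallyUniformlyOn_iff_forall_isCompact hΩ).mp hf K hKΩ hK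
    exact ⟨_, Metric.ball_mem_nhds x (half_pos hδ),
      uniformCauchySeqOn_fderiv_of_thickening (half_pos hδ)
        (fun k => (hF k).mono (hsub.trans hKΩ)) (hfK.uniformCauchySeqOn.mono hsub)⟩
  refine ⟨fun x => limUnder l fun k => fderiv ℂ (F k) x, fun u hu x hx => ?_⟩
  obtain ⟨t, ht, htC⟩ := hlocal x hx
  exact ⟨t, mem_nhdsWithin_of_mem_nhds ht, htC.tendstoUniformlyOn_of_tendsto
    (fun y hy => tendsto_nhds_limUnder (cauchy_iff_exists_le_nhds.mp (htC.cauchy_map hy))) u hu⟩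

theorem differentiableOn_and_tendstoLocallyUniformlyOn_fderiv
    (hΩ : IsOpen Ω) (hF : ∀ k, DifferentiableOn ℂ (F k) Ω)
    (hf : TendstoLocallyUniformlyOn F f l Ω) :
    DifferentiableOn ℂ f Ω ∧
      TendstoLocallyUniformlyOn (fun k => fderiv ℂ (F k)) (fderiv ℂ f) l Ω := by
  obtain ⟨f', hf'⟩ := exists_tendstoLocallyUniformlyOn_fderiv hΩ hF hf
  have hderiv : ∀ x ∈ Ω, HasFDerivAt f (f' x) x := fun x hx =>
    hasFDerivAt_of_tendstoLocallyUniformlyOn hΩ hf'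
      (fun k y hy => ((hF k).differentiableAt (hΩ.mem_nhds hy)).hasFDerivAt)
      (fun y hy => hf.tendsto_at hy) hx
  exact ⟨fun x hx => (hderiv x hx).differentiableAt.differentiableWithinAt,
    hf'.congr_right fun x hx => (hderiv x hx).fderiv.symm⟩

end Weierstrass

variable {n : ℕ} {ι : Type*} {l : Filter ι} [l.NeBot] {Ω : Set (Fin n → ℂ)} {ζ : Fin n → ℂ}
  {f : (Fin n → ℂ) → ℂ}

theorem tendstoLocallyUniformlyOn_pd {F : ι → (Fin n → ℂ) → ℂ} (hΩ : IsOpen Ω)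
    (hF : ∀ k, DifferentiableOn ℂ (F k) Ω) (hf : TendstoLocallyUniformlyOn F f l Ω) (i : Fin n) :
    TendstoLocallyUniformlyOn (fun k => pd i (F k)) (pd i f) l Ω :=
  (ContinuousLinearMap.apply ℂ ℂ (Pi.single i 1 : Fin n → ℂ)).uniformContinuous
    |>.comp_tendstoLocallyUniformlyOn
      (differentiableOn_and_tendstoLocallyUniformlyOn_fderiv hΩ hF hf).2

theorem tendstoLocallyUniformlyOn_iterate_pd {Q : ι → MvPolynomial (Fin n) ℂ} (hΩ : IsOpen Ω)
    (hf : TendstoLocallyUniformlyOn (fun k => mvEval (Q k)) f l Ω) (i : Fin n) (s : ℕ) :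
    TendstoLocallyUniformlyOn (fun k => mvEval ((MvPolynomial.pderiv i)^[s] (Q k)))
      ((pd i)^[s] f) l Ω := by
  induction s generalizing Q f with
  | zero => exact hf
  | succ _ ih =>
    refine ih (Q := fun k => MvPolynomial.pderiv i (Q k)) ?_
    simp only [← pd_mvEval]
    exact tendstoLocallyUniformlyOn_pd hΩ
      (fun k => (differentiable_mvEval (Q k)).differentiableOn) hf i

theorem tendstoLocallyUniformlyOn_Dml {Q : ι → MvPolynomial (Fin n) ℂ} (hΩ : IsOpen Ω)
    (hf : TendstoLocallyUniformlyOn (fun k => mvEval (Q k)) f l Ω) (ℓ : Fin n → ℕ) :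
    TendstoLocallyUniformlyOn (fun k => Dml ℓ (mvEval (Q k))) (Dml ℓ f) l Ω := by
  simp only [Dml_mvEval]
  unfold iteratedPderiv Dml
  induction List.finRange n with
  | nil => exact hf
  | cons i is ih => exact tendstoLocallyUniformlyOn_iterate_pd hΩ ih i (ℓ i)

theorem tendsto_pSum_of_tendstoLocallyUniformlyOn {Q : ι → MvPolynomial (Fin n) ℂ}
    (hΩ : IsOpen Ω) (hζ : ζ ∈ Ω) (hf : TendstoLocallyUniformlyOn (fun k => mvEval (Q k)) f l Ω)
    (Nj : ℕ → Fin n → ℕ) (lam : ℕ) (z : Fin n → ℂ) :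
    Tendsto (fun k => pSum Nj (mvEval (Q k)) ζ lam z) l (𝓝 (pSum Nj f ζ lam z)) := by
  unfold pSum pSumExt
  exact tendsto_finsetSum _ fun j _ => ((tendstoLocallyUniformlyOn_Dml hΩ hf (Nj j)).tendsto_at hζ
    |>.const_mul _).mul_const _

end LocallyUniformLimits

section UniformLimits

theorem exists_tendstoUniformlyOn_of_dist_le_geometric {X Y : Type*} [PseudoMetricSpace Y]
    [CompleteSpace Y] [Nonempty Y] {F : ℕ → X → Y} {L : ℕ → Set X} (hL : Monotone L)
    (hF : ∀ k, ∀ z ∈ L k, dist (F k z) (F (k + 1) z) ≤ (1 / 2) ^ k) :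
    ∃ f : X → Y, ∀ m, TendstoUniformlyOn F f atTop (L m) := by
  have hgeom (k : ℕ) (z : X) (hz : z ∈ L k) (j : ℕ) :
      dist (F (k + j) z) (F (k + (j + 1)) z) ≤ (1 / 2) ^ k * (1 / 2) ^ j := by
    rw [← pow_add, ← add_assoc]
    exact hF (k + j) z (hL (Nat.le_add_right k j) hz)
  have hlim (k : ℕ) (z : X) (hz : z ∈ L k) :
      Tendsto (fun j => F j z) atTop (𝓝 (limUnder atTop fun j => F j z)) := by
    obtain ⟨a, ha⟩ := cauchySeq_tendsto_of_complete
      (cauchySeq_of_le_geometric _ _ one_half_lt_one (hgeom k z hz))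
    refine tendsto_nhds_limUnder ⟨a, (tendsto_add_atTop_iff_nat k).mp ?_⟩
    simpa only [add_comm] using ha
  refine ⟨fun z => limUnder atTop fun j => F j z, fun m =>
    Metric.tendstoUniformlyOn_iff.mpr fun ε hε => ?_⟩
  have hsmall : Tendsto (fun k : ℕ => ((1 : ℝ) / 2) ^ k / (1 - 1 / 2)) atTop (𝓝 0) := by
    simpa only [zero_div] using
      (tendsto_pow_atTop_nhds_zero_of_lt_one (r := (1 / 2 : ℝ)) one_half_pos.le
        one_half_lt_one).div_const (1 - 1 / 2)
  filter_upwards [hsmall.eventually_lt_const hε, eventually_ge_atTop m] with k hk hmk z hz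
  have htail := (hlim m z hz).comp (tendsto_add_atTop_nat k)
  simp only [Function.comp_def, add_comm _ k] at htail
  rw [dist_comm]
  exact (dist_le_of_le_geometric_of_tendsto₀ _ _ one_half_lt_one
    (hgeom k z (hL hmk hz)) htail).trans_lt hk

theorem exists_strictMono_tendstoUniformlyOn {X Y : Type*} [PseudoMetricSpace Y] {K : Set X}
    {F : ℕ → X → Y} {g : X → Y}
    (h : ∀ ε > 0, ∃ᶠ k in atTop, ∀ z ∈ K, dist (F k z) (g z) < ε) :
    ∃ φ : ℕ → ℕ, StrictMono φ ∧ TendstoUniformlyOn (fun N => F (φ N)) g atTop K := by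
  obtain ⟨φ, hφ, hφK⟩ := extraction_forall_of_frequently fun N : ℕ =>
    h (1 / ((N : ℝ) + 1)) Nat.one_div_pos_of_nat
  refine ⟨φ, hφ, Metric.tendstoUniformlyOn_iff.mpr fun ε hε => ?_⟩
  filter_upwards [tendsto_one_div_add_atTop_nhds_zero_nat.eventually_lt_const hε] with N hN z hz
  rw [dist_comm]
  exact (hφK N z hz).trans hN

theorem exists_monotone_isCompact_subset_of_isOpen {X : Type*} [TopologicalSpace X]
    [LocallyCompactSpace X] [SecondCountableTopology X] {Ω : Set X} (hΩ : IsOpen Ω) :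
    ∃ L : ℕ → Set X, Monotone L ∧ (∀ k, IsCompact (L k)) ∧ (∀ k, L k ⊆ Ω) ∧
      ∀ C, IsCompact C → C ⊆ Ω → ∃ k, C ⊆ L k := by
  have := hΩ.locallyCompactSpace
  let E : CompactExhaustion Ω := default
  refine ⟨fun k => Subtype.val '' E k, fun j k hjk => image_mono (E.subset hjk),
    fun k => (E.isCompact k).image continuous_subtype_val,
    fun k => Subtype.coe_image_subset _ _, fun C hC hCΩ => ?_⟩
  obtain ⟨k, hk⟩ := E.exists_superset_of_isCompact
    (Topology.IsInducing.subtypeVal.isCompact_preimage_iff (Subtype.range_coe ▸ hCΩ) |>.mpr hC)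
  refine ⟨k, fun z hz => ⟨⟨z, hCΩ hz⟩, hk hz, rfl⟩⟩

theorem exists_seq_frequently_mem_nhds (X : Type*) [TopologicalSpace X]
    [TopologicalSpace.SeparableSpace X] [Nonempty X] :
    ∃ u : ℕ → X, ∀ x, ∀ U ∈ 𝓝 x, ∃ᶠ k in atTop, u k ∈ U := by
  refine ⟨fun k => TopologicalSpace.denseSeq X k.unpair.1, fun x U hU => ?_⟩
  obtain ⟨_, hj, j, rfl⟩ :=
    mem_closure_iff_nhds.mp (TopologicalSpace.denseRange_denseSeq X x) U hU
  refine frequently_atTop.mpr fun N => ⟨Nat.pair j N, Nat.right_le_pair j N, ?_⟩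
  simpa only [Nat.unpair_pair] using hj

end UniformLimits

section UniversalSeries

theorem exists_seq_frequently_dist_mvEval_lt (n : ℕ) :
    ∃ R : ℕ → MvPolynomial (Fin n) ℂ, ∀ P : MvPolynomial (Fin n) ℂ, ∀ K, IsCompact K →
      ∀ ε > 0, ∃ᶠ k in atTop, ∀ z ∈ K, dist (mvEval (R k) z) (mvEval P z) < ε := by
  let ev (P : MvPolynomial (Fin n) ℂ) : C(Fin n → ℂ, ℂ) := ⟨mvEval P, continuous_mvEval P⟩
  obtain ⟨u, hu⟩ := exists_seq_frequently_mem_nhds (range ev)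
  choose R hR using fun k => (u k).2
  refine ⟨R, fun P K hK ε hε => ?_⟩
  have hnhds : ∀ᶠ g : range ev in 𝓝 ⟨ev P, mem_range_self P⟩,
      ∀ z ∈ K, dist (mvEval P z) (g.1 z) < ε :=
    Metric.tendstoUniformlyOn_iff.mp
      (ContinuousMap.tendsto_iff_forall_isCompact_tendstoUniformlyOn.mp
        continuous_subtype_val.continuousAt K hK) ε hε
  refine (hu _ _ hnhds).mono fun k hk z hz => ?_
  rw [dist_comm]
  have := hk z hz
  rwa [← hR] at this

variable {n : ℕ} {Ω : Set (Fin n → ℂ)} {ζ : Fin n → ℂ} {𝕄 : Set ℕ} {Nj : ℕ → Fin n → ℕ}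

theorem exists_near_and_pSum_eq (hΩ : PolynomiallySeparated Ω) (hζ : ζ ∈ Ω) (h𝕄 : 𝕄.Infinite)
    (hNj : Function.Bijective Nj) (Q R : MvPolynomial (Fin n) ℂ) (lam : ℕ)
    {K L : Set (Fin n → ℂ)} (hK : IsCompact K) (hL : IsCompact L) (hKΩ : Disjoint K Ω)
    (hLΩ : L ⊆ Ω) {ε : ℝ} (hε : 0 < ε) :
    ∃ (Q' : MvPolynomial (Fin n) ℂ) (lam' : ℕ), lam ≤ lam' ∧ lam' ∈ 𝕄 ∧
      pSum Nj (mvEval Q') ζ lam' = mvEval Q' ∧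
      (∀ μ ≤ lam, pSum Nj (mvEval Q') ζ μ = pSum Nj (mvEval Q) ζ μ) ∧
      (∀ z ∈ K, dist (mvEval Q' z) (mvEval R z) < ε) ∧
      ∀ z ∈ L, dist (mvEval Q' z) (mvEval Q z) < ε := by
  let d := (Finset.range (lam + 1)).sup (fun j => ∑ i, Nj j i) + 1
  have hd (j : ℕ) (hj : j ≤ lam) : ∑ i, Nj j i < d :=
    Nat.lt_succ_of_le (Finset.le_sup (f := fun j => ∑ i, Nj j i)
      (Finset.mem_range_succ_iff.mpr hj))
  obtain ⟨p, hpζ, hpK, hpL⟩ :=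
    hΩ.exists_add_pow_mul_sub_near hζ Q R hK hL hKΩ hLΩ (Nat.succ_ne_zero _ : d ≠ 0) hε
  obtain ⟨lam', hmem, heq, hle⟩ := ((Nat.frequently_atTop_iff_infinite.mpr h𝕄).and_eventually
    ((eventually_pSum_mvEval_eq hNj ζ (Q + p ^ d * (R - Q))).and
      (eventually_ge_atTop lam))).exists
  exact ⟨_, lam', hle, hmem, heq, fun μ hμ =>
    pSum_mvEval_add_pow_mul Nj hpζ Q (R - Q) fun j hj => hd j (hj.trans hμ), hpK, hpL⟩

theorem exists_seq_near_and_pSum_eq (hΩ : PolynomiallySeparated Ω) (hζ : ζ ∈ Ω)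
    (h𝕄 : 𝕄.Infinite) (hNj : Function.Bijective Nj) (R : ℕ → MvPolynomial (Fin n) ℂ)
    {K L : ℕ → Set (Fin n → ℂ)} (hK : ∀ k, IsCompact (K k)) (hL : ∀ k, IsCompact (L k))
    (hKΩ : ∀ k, Disjoint (K k) Ω) (hLΩ : ∀ k, L k ⊆ Ω) {ε : ℕ → ℝ} (hε : ∀ k, 0 < ε k) :
    ∃ (Q : ℕ → MvPolynomial (Fin n) ℂ) (lam : ℕ → ℕ), (∀ k, lam k ∈ 𝕄) ∧
      (∀ k l, k ≤ l → pSum Nj (mvEval (Q l)) ζ (lam k) = mvEval (Q k)) ∧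
      (∀ k, ∀ z ∈ K k, dist (mvEval (Q k) z) (mvEval (R k) z) < ε k) ∧
      ∀ k, ∀ z ∈ L (k + 1), dist (mvEval (Q (k + 1)) z) (mvEval (Q k) z) < ε (k + 1) := by
  choose next index hle hmem heq hpres hnearK hnearL using
    fun (k : ℕ) (s : MvPolynomial (Fin n) ℂ × ℕ) => exists_near_and_pSum_eq hΩ hζ h𝕄 hNj
      s.1 (R k) s.2 (hK k) (hL k) (hKΩ k) (hLΩ k) (hε k)
  let s : ℕ → MvPolynomial (Fin n) ℂ × ℕ :=
    fun k => Nat.rec (0, 0) (fun k s => (next k s, index k s)) k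
  have hmono : Monotone fun k => (s k).2 := monotone_nat_of_le_succ fun k => hle k (s k)
  refine ⟨fun k => (s (k + 1)).1, fun k => (s (k + 1)).2, fun k => hmem k (s k),
    fun k l hkl => ?_, fun k => hnearK k (s k), fun k => hnearL (k + 1) (s (k + 1))⟩
  induction l, hkl using Nat.le_induction with
  | base => exact heq k (s k)
  | succ l hkl ih =>
    exact (hpres (l + 1) (s (l + 1)) _ (hmono (Nat.succ_le_succ hkl))).trans ih

theorem exists_differentiableOn_pSum_near (hΩ : IsOpen Ω) (hsep : PolynomiallySeparated Ω)
    (hζ : ζ ∈ Ω) (h𝕄 : 𝕄.Infinite) (hNj : Function.Bijective Nj)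
    (R : ℕ → MvPolynomial (Fin n) ℂ) {K : ℕ → Set (Fin n → ℂ)} (hK : ∀ k, IsCompact (K k))
    (hKΩ : ∀ k, Disjoint (K k) Ω) :
    ∃ f : (Fin n → ℂ) → ℂ, DifferentiableOn ℂ f Ω ∧ ∃ lam : ℕ → ℕ, (∀ k, lam k ∈ 𝕄) ∧
      (∀ k, ∀ z ∈ K k, dist (pSum Nj f ζ (lam k) z) (mvEval (R k) z) < (1 / 2) ^ k) ∧
      TendstoLocallyUniformlyOn (fun k => pSum Nj f ζ (lam k)) f atTop Ω := by
  obtain ⟨L, hLmono, hL, hLΩ, hexhaust⟩ := exists_monotone_isCompact_subset_of_isOpen hΩ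
  obtain ⟨Q, lam, hlam, hpSum, hnearK, hnearL⟩ := exists_seq_near_and_pSum_eq hsep hζ h𝕄 hNj R
    hK hL hKΩ hLΩ (ε := fun k => (1 / 2) ^ k) fun k => by positivity
  obtain ⟨f, hf⟩ := exists_tendstoUniformlyOn_of_dist_le_geometric (F := fun k => mvEval (Q k))
    hLmono fun k z hz => calc
      dist (mvEval (Q k) z) (mvEval (Q (k + 1)) z) ≤ (1 / 2) ^ (k + 1) := by
        rw [dist_comm]
        exact (hnearL k z (hLmono k.le_succ hz)).le
      _ ≤ (1 / 2) ^ k := pow_le_pow_of_le_one one_half_pos.le one_half_lt_one.le k.le_succ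
  have hloc : TendstoLocallyUniformlyOn (fun k => mvEval (Q k)) f atTop Ω :=
    (tendstoLocallyUniformlyOn_iff_forall_isCompact hΩ).mpr fun C hCΩ hC =>
      have ⟨m, hm⟩ := hexhaust C hC hCΩ
      (hf m).mono hm
  have hfΩ : DifferentiableOn ℂ f Ω := (differentiableOn_and_tendstoLocallyUniformlyOn_fderiv hΩ
    (fun k => (differentiable_mvEval (Q k)).differentiableOn) hloc).1
  have heq (k : ℕ) : pSum Nj f ζ (lam k) = mvEval (Q k) := funext fun z =>
    tendsto_nhds_unique (tendsto_pSum_of_tendstoLocallyUniformlyOn hΩ hζ hloc Nj (lam k) z)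
      (tendsto_atTop_of_eventually_const fun l hl => congrFun (hpSum k l hl) z)
  simp only [← heq] at hloc hnearK
  exact ⟨f, hfΩ, lam, hlam, hnearK, hloc⟩

theorem rem2_7_general (hΩ : IsOpen Ω) (hsep : PolynomiallySeparated Ω) (hζ : ζ ∈ Ω)
    (h𝕄 : 𝕄.Infinite) (hNj : Function.Bijective Nj) :
    ∃ f : (Fin n → ℂ) → ℂ, DifferentiableOn ℂ f Ω ∧
      ∀ K, IsCompact K → Disjoint K Ω → ∀ P : MvPolynomial (Fin n) ℂ,
        ∃ lam : ℕ → ℕ, (∀ N, lam N ∈ 𝕄) ∧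
          TendstoUniformlyOn (fun N => pSum Nj f ζ (lam N)) (mvEval P) atTop K ∧
          ∀ L ⊆ Ω, IsCompact L →
            TendstoUniformlyOn (fun N => pSum Nj f ζ (lam N)) f atTop L := by
  obtain ⟨R, hR⟩ := exists_seq_frequently_dist_mvEval_lt n
  obtain ⟨f, hfΩ, lam, hlam, hnear, hloc⟩ := exists_differentiableOn_pSum_near hΩ hsep hζ h𝕄 hNj
    R (K := fun k => Metric.closedBall 0 k \ Ω)
    (fun k => (isCompact_closedBall 0 (k : ℝ)).diff hΩ) fun k => disjoint_sdiff_left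
  refine ⟨f, hfΩ, fun K hK hKΩ P => ?_⟩
  have hfreq : ∀ ε > 0, ∃ᶠ k in atTop, ∀ z ∈ K, dist (pSum Nj f ζ (lam k) z) (mvEval P z) < ε := by
    intro ε hε
    obtain ⟨r, hr⟩ := hK.isBounded.subset_closedBall 0
    have hsmall : ∀ᶠ k : ℕ in atTop, (1 / 2 : ℝ) ^ k < ε / 2 :=
      (tendsto_pow_atTop_nhds_zero_of_lt_one one_half_pos.le one_half_lt_one).eventually_lt_const
        (half_pos hε)
    refine ((hR P K hK (ε / 2) (half_pos hε)).and_eventually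
      (hsmall.and (tendsto_natCast_atTop_atTop.eventually_ge_atTop r))).mono ?_
    rintro k ⟨hk, hkε, hrk⟩ z hz
    have hzk := hnear k z ⟨Metric.closedBall_subset_closedBall hrk (hr hz), disjoint_left.mp hKΩ hz⟩
    linarith [dist_triangle (pSum Nj f ζ (lam k) z) (mvEval (R k) z) (mvEval P z), hk z hz]
  obtain ⟨φ, hφ, hφK⟩ := exists_strictMono_tendstoUniformlyOn hfreq
  refine ⟨lam ∘ φ, fun N => hlam (φ N), hφK, fun L hLΩ hL u hu => ?_⟩
  exact hφ.tendsto_atTop.eventually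
    ((tendstoLocallyUniformlyOn_iff_forall_isCompact hΩ).mp hloc L hLΩ hL u hu)

end UniversalSeries

/-- Remark 2.7: for the half-space `Ω = {z : Re z₁ > 0}` the universal
approximation holds simultaneously for ALL compact convex sets disjoint from `Ω`. -/
theorem rem2_7 (n : ℕ) (hn : 0 < n) (𝕄 : Set ℕ) (h𝕄 : 𝕄.Infinite)
    (ζ : Fin n → ℂ) (hζ : ζ ∈ {z : Fin n → ℂ | 0 < (z ⟨0, hn⟩).re})
    (Nj : ℕ → Fin n → ℕ) (hNj : Function.Bijective Nj) :
    ∃ f : (Fin n → ℂ) → ℂ,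
      DifferentiableOn ℂ f {z : Fin n → ℂ | 0 < (z ⟨0, hn⟩).re} ∧
      ∀ K : Set (Fin n → ℂ), IsCompact K → Convex ℝ K →
        K ∩ {z : Fin n → ℂ | 0 < (z ⟨0, hn⟩).re} = ∅ →
        ∀ P : MvPolynomial (Fin n) ℂ, ∃ lam : ℕ → ℕ, (∀ N, lam N ∈ 𝕄) ∧
          TendstoUniformlyOn (fun N => pSum Nj f ζ (lam N)) (mvEval P) atTop K ∧
          ∀ L : Set (Fin n → ℂ), L ⊆ {z : Fin n → ℂ | 0 < (z ⟨0, hn⟩).re} → IsCompact L →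
            TendstoUniformlyOn (fun N => pSum Nj f ζ (lam N)) f atTop L := by
  obtain ⟨f, hf, h⟩ := rem2_7_general (Ω := {z : Fin n → ℂ | 0 < (z ⟨0, hn⟩).re})
    (isOpen_lt continuous_const (by fun_prop))
    (by simpa only [mvEval, MvPolynomial.eval_X] using
      polynomiallySeparated_setOf_re_pos (MvPolynomial.X ⟨0, hn⟩)) hζ h𝕄 hNj
  exact ⟨f, hf, fun K hK _ hKΩ => h K hK (disjoint_iff_inter_eq_empty.mpr hKΩ)⟩

end
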